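/- Define S(z) = Σ_{h < z, h even} (1/h)·∏_{p | h, p > 2}(1 + 1/(p − 2)) for z ≥ 2 (and S(z) = 0 for 1 ≤ z < 2), the product over odd prime divisors of h being 1 when empty. Then S(z) = (1 + o(1))·(1/(2𝔖))·log z as z → ∞; that is, for every ε > 0 there exists z₀ such that |S(z) − log z/(2𝔖)| ≤ ε·log z for all z ≥ z₀. -/

import Mathlib

open Real Finset

attribute [local instance] Classical.propDecidable

/-- The twin-prime constant `𝔖 = ∏_{p > 2 prime} (1 − 1/(p−1)²)`. -/
noncomputable def twinConst : ℝ :=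
  ∏' p : Nat.Primes, if 2 < (p : ℕ) then 1 - 1 / ((p : ℕ) - 1 : ℝ) ^ 2 else 1

/-- `S z = Σ_{h < z, h even} (1/h)·∏_{p ∣ h, p > 2}(1 + 1/(p − 2))`
(which vanishes for `z < 2`). -/
noncomputable def S (z : ℝ) : ℝ :=
  ∑ h ∈ (Finset.range (⌈z⌉₊ + 1)).filter
      (fun h : ℕ => 2 ∣ h ∧ 0 < h ∧ (h : ℝ) < z),
    (1 / (h : ℝ)) * ∏ p ∈ h.primeFactors.filter (fun p => 2 < p), (1 + 1 / ((p : ℝ) - 2))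

/-- local factor weight -/
noncomputable def aP (p : ℕ) : ℝ := if 2 < p then 1 / ((p : ℝ) - 2) else 0

/-- multiplicative weight supported on odd squarefree numbers -/
noncomputable def gW (d : ℕ) : ℝ := if Squarefree d then ∏ p ∈ d.primeFactors, aP p else 0

/-- `gW d / d` -/
noncomputable def FW (d : ℕ) : ℝ := gW d / d

lemma aP_nonneg (p : ℕ) : 0 ≤ aP p := by
  unfold aP
  split_ifs with h
  · have : (2 : ℝ) < p := by exact_mod_cast h
    exact (one_div_pos.2 (by linarith)).le
  · exact le_rfl

lemma gW_nonneg (d : ℕ) : 0 ≤ gW d := by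
  unfold gW
  split_ifs
  · exact Finset.prod_nonneg fun p _ => aP_nonneg p
  · exact le_rfl

lemma FW_nonneg (d : ℕ) : 0 ≤ FW d := div_nonneg (gW_nonneg d) (Nat.cast_nonneg d)

lemma FW_zero : FW 0 = 0 := by simp [FW]

lemma FW_one : FW 1 = 1 := by simp [FW, gW]

lemma gW_mul {m n : ℕ} (h : Nat.Coprime m n) : gW (m * n) = gW m * gW n := by
  unfold gW
  simp only [Nat.squarefree_mul h]
  by_cases hm : Squarefree m
  · by_cases hn : Squarefree n
    · simp only [hm, hn, and_self, if_true]
      rw [h.primeFactors_mul, Finset.prod_union h.disjoint_primeFactors]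
    · simp [hn]
  · simp [hm]

lemma FW_mul {m n : ℕ} (h : Nat.Coprime m n) : FW (m * n) = FW m * FW n := by
  unfold FW
  rw [gW_mul h]; push_cast; rw [div_mul_div_comm]

lemma aP_bound {p : ℕ} (hp : p.Prime) : p * aP p ^ 2 ≤ if p = 3 then 3 else 1 := by
  unfold aP
  split_ifs with h h3 h3
  · subst h3; norm_num
  · have h4 : p ≠ 4 := by rintro rfl; revert hp; decide
    have h5 : 5 ≤ p := by omega
    have : (5 : ℝ) ≤ p := by exact_mod_cast h5
    rw [one_div, inv_pow, ← div_eq_mul_inv, div_le_one (by nlinarith)]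
    nlinarith
  · norm_num
  · norm_num

lemma gW_sq_bound (d : ℕ) : d * gW d ^ 2 ≤ 4 := by
  unfold gW
  split_ifs with h
  · have e : (d : ℝ) = ∏ p ∈ d.primeFactors, (p : ℝ) := by
      rw [← Nat.cast_prod, Nat.prod_primeFactors_of_squarefree h]
    rw [← Finset.prod_pow]
    nth_rewrite 1 [e]
    rw [← Finset.prod_mul_distrib]
    calc _ ≤ ∏ p ∈ d.primeFactors, (if p = 3 then (3 : ℝ) else 1) := by
          apply Finset.prod_le_prod
          · intro p _; positivity
          · intro p hp; exact aP_bound (Nat.prime_of_mem_primeFactors hp)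
      _ ≤ 4 := by
          rw [Finset.prod_ite_eq']
          split_ifs <;> norm_num
  · norm_num

lemma FW_bound (d : ℕ) : FW d ≤ 2 * (1 / (d : ℝ) ^ (3 / 2 : ℝ)) := by
  rcases Nat.eq_zero_or_pos d with rfl | hd
  · simp [FW_zero]
  have hd' : (0 : ℝ) < d := by exact_mod_cast hd
  have e : (d : ℝ) ^ (3 / 2 : ℝ) = d * √d := by
    rw [show (3 / 2 : ℝ) = 1 + 1 / 2 by norm_num, rpow_add hd', rpow_one, sqrt_eq_rpow]
  have hs : 0 < √(d : ℝ) := sqrt_pos.2 hd'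
  have hb : √(d : ℝ) * gW d ≤ 2 := by
    apply abs_le_of_sq_le_sq' _ (by norm_num) |>.2
    rw [mul_pow, sq_sqrt hd'.le]
    linarith [gW_sq_bound d]
  rw [e, FW, mul_one_div, div_le_div_iff₀ hd' (by positivity)]
  nlinarith

lemma FW_summable : Summable FW := by
  refine Summable.of_nonneg_of_le FW_nonneg FW_bound (Summable.mul_left _ ?_)
  exact Real.summable_one_div_nat_rpow.2 (by norm_num)

lemma FW_prime_pow {p : ℕ} (hp : p.Prime) : ∑' e, FW (p ^ e) = 1 + aP p / p := by
  rw [tsum_eq_sum (s := Finset.range 2)]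
  · rw [Finset.sum_range_succ, Finset.sum_range_one, pow_zero, FW_one, pow_one]
    simp [FW, gW, hp.prime.squarefree, hp.primeFactors]
  · intro e he
    have he' : 2 ≤ e := by
      have := Finset.mem_range.not.1 he
      omega
    have : ¬ Squarefree (p ^ e) := by
      rw [Nat.squarefree_pow_iff hp.ne_one (by omega)]
      rintro ⟨_, h⟩; omega
    simp [FW, gW, this]

/-- The constant. -/
noncomputable def PC : ℝ := ∑' n, FW n

lemma PC_pos : 0 < PC :=
  lt_of_lt_of_le (by rw [FW_one]; norm_num) (FW_summable.le_tsum 1 fun i _ => FW_nonneg i)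

lemma twinConst_eq : twinConst = PC⁻¹ := by
  have h := EulerProduct.eulerProduct_hasProd FW_one FW_mul
    (by simpa only [Real.norm_of_nonneg (FW_nonneg _)] using FW_summable) FW_zero
  have h2 := h.inv₀ (ne_of_gt PC_pos)
  unfold twinConst
  rw [← PC] at h2
  rw [← h2.tprod_eq]
  congr 1
  funext p
  rw [FW_prime_pow p.2, aP]
  split_ifs with hp
  · have : (2 : ℝ) < (p : ℕ) := by exact_mod_cast hp
    have h1 : ((p : ℕ) : ℝ) - 2 ≠ 0 := by linarith
    have h3 : ((p : ℕ) : ℝ) - 1 ≠ 0 := by linarith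
    have h4 : ((p : ℕ) : ℝ) ≠ 0 := by linarith
    have h5 : 1 + 1 / (((p : ℕ) : ℝ) - 2) / (p : ℕ) = (((p : ℕ) : ℝ) - 1) ^ 2 / ((((p : ℕ) : ℝ) - 2) * (p : ℕ)) := by
      field_simp; ring
    rw [h5, inv_div]
    field_simp; ring
  · simp

lemma sum_gW {n : ℕ} (hn : n ≠ 0) :
    ∑ d ∈ n.divisors, gW d = ∏ p ∈ n.primeFactors, (1 + aP p) := by
  rw [Finset.prod_one_add]
  unfold gW
  rw [← Finset.sum_filter]
  refine Finset.sum_nbij' (fun d => d.primeFactors) (fun t => ∏ p ∈ t, p) ?_ ?_ ?_ ?_ ?_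
  · intro d hd
    simp only [Finset.mem_filter, Nat.mem_divisors] at hd
    exact Finset.mem_powerset.2 (Nat.primeFactors_mono hd.1.1 hn)
  · intro t ht
    have ht := Finset.mem_powerset.1 ht
    have hpr : ∀ p ∈ t, p.Prime := fun p hp => Nat.prime_of_mem_primeFactors (ht hp)
    simp only [Finset.mem_filter, Nat.mem_divisors]
    refine ⟨⟨(Finset.prod_dvd_prod_of_subset _ _ _ ht).trans (Nat.prod_primeFactors_dvd n), hn⟩, ?_⟩
    exact Finset.squarefree_prod_of_pairwise_isCoprime
      (fun p hp q hq hne => Nat.coprime_iff_isRelPrime.1 ((Nat.coprime_primes (hpr p hp) (hpr q hq)).2 hne))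
      (fun p hp => (hpr p hp).prime.squarefree)
  · intro d hd
    exact Nat.prod_primeFactors_of_squarefree (Finset.mem_filter.1 hd).2
  · intro t ht
    exact Nat.primeFactors_prod fun p hp =>
      Nat.prime_of_mem_primeFactors (Finset.mem_powerset.1 ht hp)
  · intro d _; rfl

/-- `FW` as an arithmetic function -/
noncomputable def FA : ArithmeticFunction ℝ := ⟨FW, FW_zero⟩

/-- `1/n` as an arithmetic function -/
noncomputable def IA : ArithmeticFunction ℝ := ⟨fun n => (n : ℝ)⁻¹, by simp⟩

lemma harm_eq (n : ℕ) : ∑ m ∈ Finset.Ioc 0 n, IA m = (harmonic n : ℝ) := by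
  rw [harmonic_eq_sum_Icc]
  push_cast
  rfl

lemma FI_apply {n : ℕ} (hn : n ≠ 0) :
    (FA * IA) n = (1 / (n : ℝ)) * ∏ p ∈ n.primeFactors, (1 + aP p) := by
  rw [ArithmeticFunction.mul_apply, ← sum_gW hn, Finset.mul_sum,
    ← Nat.sum_divisorsAntidiagonal (fun d _ => 1 / (n : ℝ) * gW d)]
  refine Finset.sum_congr rfl fun x hx => ?_
  have h := (Nat.mem_divisorsAntidiagonal.1 hx).1
  change FW x.1 * (x.2 : ℝ)⁻¹ = _
  rw [FW, ← h]
  push_cast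
  rw [one_div, mul_inv]; ring

/-- main sum -/
noncomputable def TN (N : ℕ) : ℝ := ∑ n ∈ Finset.Ioc 0 N, FW n * (harmonic (N / n) : ℝ)

lemma TN_eq (N : ℕ) :
    TN N = ∑ n ∈ Finset.Ioc 0 N, (1 / (n : ℝ)) * ∏ p ∈ n.primeFactors, (1 + aP p) := by
  have h := ArithmeticFunction.sum_Ioc_mul_eq_sum_sum FA IA N
  unfold TN
  simp only [harm_eq] at h
  refine Eq.trans h.symm (Finset.sum_congr rfl fun n hn => ?_)
  exact FI_apply (by have := (Finset.mem_Ioc.1 hn).1; omega)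

lemma prod_two_mul {m : ℕ} (hm : m ≠ 0) :
    ∏ p ∈ (2 * m).primeFactors.filter (fun p => 2 < p), (1 + 1 / ((p : ℝ) - 2))
      = ∏ p ∈ m.primeFactors, (1 + aP p) := by
  have e : (2 * m).primeFactors.filter (fun p => 2 < p)
      = m.primeFactors.filter (fun p => 2 < p) := by
    rw [Nat.primeFactors_mul two_ne_zero hm, Nat.prime_two.primeFactors]
    ext p
    simp only [Finset.mem_filter, Finset.mem_union, Finset.mem_singleton]
    constructor
    · rintro ⟨h | h, h2⟩
      · omega
      · exact ⟨h, h2⟩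
    · rintro ⟨h, h2⟩; exact ⟨Or.inr h, h2⟩
  rw [e, Finset.prod_filter]
  refine Finset.prod_congr rfl fun p _ => ?_
  unfold aP
  split_ifs <;> simp

lemma S_eq {z : ℝ} (hz : 0 < z) : S z = TN (⌈z / 2⌉₊ - 1) / 2 := by
  rw [TN_eq, S, Finset.sum_div]
  symm
  refine Finset.sum_nbij' (fun m => 2 * m) (fun h => h / 2) ?_ ?_ ?_ ?_ ?_
  · intro m hm
    have hm := Finset.mem_Ioc.1 hm
    have h1 : m < ⌈z / 2⌉₊ := by omega
    have h2 : (m : ℝ) < z / 2 := Nat.lt_ceil.1 h1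
    have h3 : ((2 * m : ℕ) : ℝ) < z := by push_cast; linarith
    have h4 := Nat.lt_ceil.2 h3
    simp only [Finset.mem_filter, Finset.mem_range]
    exact ⟨by omega, ⟨m, rfl⟩, by omega, h3⟩
  · intro h hh
    simp only [Finset.mem_filter, Finset.mem_range] at hh
    obtain ⟨_, ⟨m, rfl⟩, h0, hl⟩ := hh
    have : m < ⌈z / 2⌉₊ := Nat.lt_ceil.2 (by push_cast at hl; linarith)
    simp only [Finset.mem_Ioc]
    omega
  · intro m _; omega
  · intro h hh
    simp only [Finset.mem_filter, Finset.mem_range] at hh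
    omega
  · intro m hm
    have hm := Finset.mem_Ioc.1 hm
    rw [prod_two_mul (by omega)]
    have : (m : ℝ) ≠ 0 := by have : m ≠ 0 := by omega
                             exact_mod_cast this
    push_cast
    field_simp

lemma TN_upper {N : ℕ} (hN : 1 ≤ N) : TN N ≤ PC * (1 + Real.log N) := by
  have hN' : (1 : ℝ) ≤ N := by exact_mod_cast hN
  calc TN N ≤ ∑ n ∈ Finset.Ioc 0 N, FW n * (1 + Real.log N) := by
        refine Finset.sum_le_sum fun n hn => mul_le_mul_of_nonneg_left ?_ (FW_nonneg n)
        have hn := Finset.mem_Ioc.1 hn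
        refine (harmonic_le_one_add_log _).trans ?_
        have h1 : 0 < N / n := Nat.div_pos hn.2 hn.1
        have h2 : N / n ≤ N := Nat.div_le_self _ _
        have := Real.log_le_log (by exact_mod_cast h1 : (0 : ℝ) < (N / n : ℕ)) (by exact_mod_cast h2 : ((N / n : ℕ) : ℝ) ≤ N)
        linarith
    _ = (∑ n ∈ Finset.Ioc 0 N, FW n) * (1 + Real.log N) := by rw [Finset.sum_mul]
    _ ≤ PC * (1 + Real.log N) := by
        refine mul_le_mul_of_nonneg_right (FW_summable.sum_le_tsum _ fun i _ => FW_nonneg i) ?_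
        have := Real.log_nonneg hN'
        linarith

lemma TN_lower {N D : ℕ} (hD : 1 ≤ D) (hN : D ≤ N) :
    (∑ n ∈ Finset.Ioc 0 D, FW n) * (Real.log N - Real.log D) ≤ TN N := by
  have hD' : (0 : ℝ) < D := by exact_mod_cast hD
  have hN' : (0 : ℝ) < N := by exact_mod_cast (by omega : 0 < N)
  rw [Finset.sum_mul]
  calc _ ≤ ∑ n ∈ Finset.Ioc 0 D, FW n * (harmonic (N / n) : ℝ) := by
        refine Finset.sum_le_sum fun n hn => mul_le_mul_of_nonneg_left ?_ (FW_nonneg n)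
        have hn := Finset.mem_Ioc.1 hn
        refine le_trans ?_ (log_add_one_le_harmonic _)
        rw [← Real.log_div hN'.ne' hD'.ne']
        refine Real.log_le_log (by positivity) ?_
        have hn0 : (0 : ℝ) < n := by exact_mod_cast hn.1
        have h1 : (N : ℝ) / D ≤ N / n :=
          div_le_div_of_nonneg_left hN'.le hn0 (by exact_mod_cast hn.2)
        refine h1.trans ?_
        rw [div_le_iff₀ hn0]
        have := Nat.lt_div_mul_add (a := N) hn.1
        have h3 : N ≤ (N / n + 1) * n := by rw [add_mul, one_mul]; omega
        exact_mod_cast h3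
    _ ≤ TN N := by
        refine Finset.sum_le_sum_of_subset_of_nonneg ?_ ?_
        · exact Finset.Ioc_subset_Ioc_right hN
        · intro n _ _
          refine mul_nonneg (FW_nonneg n) ?_
          rw [← harm_eq]
          exact Finset.sum_nonneg fun m _ => by change 0 ≤ (m : ℝ)⁻¹; positivity

lemma exists_D {ε : ℝ} (hε : 0 < ε) :
    ∃ D : ℕ, 1 ≤ D ∧ PC - ε < ∑ n ∈ Finset.Ioc 0 D, FW n := by
  have h := FW_summable.hasSum.tendsto_sum_nat
  have h2 := h.eventually (lt_mem_nhds (show PC - ε < ∑' n, FW n by rw [← PC]; linarith))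
  obtain ⟨D, hD⟩ := (h2.and (Filter.eventually_ge_atTop 1)).exists
  refine ⟨D, hD.2, hD.1.trans_le ?_⟩
  have : ∑ n ∈ Finset.range D, FW n ≤ ∑ n ∈ insert 0 (Finset.Ioc 0 D), FW n := by
    refine Finset.sum_le_sum_of_subset_of_nonneg ?_ fun n _ _ => FW_nonneg n
    intro n hn
    have := Finset.mem_range.1 hn
    simp only [Finset.mem_insert, Finset.mem_Ioc]
    omega
  rwa [Finset.sum_insert (by simp), FW_zero, zero_add] at this

/-- Banks–Shparlinski: `S(z) = (1 + o(1))·log z/(2𝔖)` as `z → ∞`. -/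
theorem S_asymptotic :
    ∀ ε > (0 : ℝ), ∃ z₀ : ℝ, ∀ z ≥ z₀,
      |S z - Real.log z / (2 * twinConst)| ≤ ε * Real.log z := by
  intro ε hε
  obtain ⟨D, hD, hDε⟩ := exists_D hε
  have hP := PC_pos
  have hD' : (1 : ℝ) ≤ D := by exact_mod_cast hD
  have hlD := Real.log_nonneg hD'
  have hl4 : 0 ≤ Real.log 4 := Real.log_nonneg (by norm_num)
  set c := Real.log 4 + Real.log D with hc
  obtain ⟨z₁, hz₁⟩ := Filter.eventually_atTop.1
    (Real.tendsto_log_atTop.eventually_ge_atTop (PC * (1 + c) / ε))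
  refine ⟨max z₁ (4 * D + 4), fun z hz => ?_⟩
  have hL := hz₁ z ((le_max_left _ _).trans hz)
  have hz4 : 4 * (D : ℝ) + 4 ≤ z := (le_max_right _ _).trans hz
  have hzpos : 0 < z := by linarith
  rw [div_le_iff₀ hε] at hL
  rw [S_eq hzpos, twinConst_eq]
  set N := ⌈z / 2⌉₊ - 1 with hNdef
  have hce : z / 2 ≤ ⌈z / 2⌉₊ := Nat.le_ceil _
  have hce2 : (⌈z / 2⌉₊ : ℝ) < z / 2 + 1 := Nat.ceil_lt_add_one (by linarith)
  have hc1 : 0 < ⌈z / 2⌉₊ := Nat.ceil_pos.2 (by linarith)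
  have hNr : (N : ℝ) = ⌈z / 2⌉₊ - 1 := by
    rw [hNdef, Nat.cast_sub (by omega)]; simp
  have hN4 : z / 4 ≤ N := by rw [hNr]; linarith
  have hNz : (N : ℝ) ≤ z := by rw [hNr]; linarith
  have hDN : D ≤ N := by
    have : (D : ℝ) ≤ N := by linarith
    exact_mod_cast this
  have hu := TN_upper (hD.trans hDN)
  have hl := TN_lower hD hDN
  have hNpos : (0 : ℝ) < N := by linarith
  have hlogu : Real.log N ≤ Real.log z := Real.log_le_log hNpos hNz
  have hlogl : Real.log z - Real.log 4 ≤ Real.log N := by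
    rw [← Real.log_div hzpos.ne' (by norm_num)]
    exact Real.log_le_log (by linarith) hN4
  set L := Real.log z
  have hLDN : 0 ≤ Real.log N - Real.log D :=
    sub_nonneg.2 (Real.log_le_log (by linarith) (by exact_mod_cast hDN))
  have hLpos : 0 ≤ L := Real.log_nonneg (by linarith)
  have e : L / (2 * PC⁻¹) = PC * L / 2 := by field_simp
  have hu2 : TN N ≤ PC * (1 + L) := hu.trans (mul_le_mul_of_nonneg_left (by linarith) hP.le)
  have hPc : 0 ≤ PC * c := mul_nonneg hP.le (by rw [hc]; linarith)
  have hl2 : (PC - ε) * (Real.log N - Real.log D) ≤ TN N :=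
    (mul_le_mul_of_nonneg_right hDε.le hLDN).trans hl
  have hl3 : PC * (L - c) ≤ PC * (Real.log N - Real.log D) :=
    mul_le_mul_of_nonneg_left (by rw [hc]; linarith) hP.le
  have hl4' : ε * (Real.log N - Real.log D) ≤ ε * L :=
    mul_le_mul_of_nonneg_left (by linarith) hε.le
  rw [e, abs_le]
  constructor
  · nlinarith
  · nlinarith
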